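/- Core modular estimate of the variable-exponent Jawerth embedding: Let n ∈ ℕ, ε > 0 and let p : ℝⁿ → (0,∞) satisfy 0 < p⁻ := inf p ≤ sup p < ∞ with 1/p locally log-Hölder continuous. Then there exists a constant C > 0 such that for every measurable h : ℝⁿ → [0,∞) with ∫_{ℝⁿ} h(x)^{p(x)} dx ≤ 1, one has Σ_{j=0}^∞ 2^{−jnε/(1+ε)} ( Σ_{m∈ℤⁿ} ∫_{Q_{j,m}} h_{j,m}^{(1+ε)p(x)} dx )^{1/(1+ε)} ≤ C, where h_{j,m} := ess inf_{y∈Q_{j,m}} h(y). -/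

import Mathlib

/-!
Write `t = h_{j,m}` and `F x = h x ^ p x`, so that `t ^ p x ≤ F x` for almost every `x ∈ Q_{j,m}`.

If `t ≤ 1`, then `t ^ ((1 + ε) p x) ≤ t ^ p x ≤ F x`. All such cubes of one generation together
contribute at most `∫ F ≤ 1`, and the weights `2 ^ (-j n ε / (1 + ε))` are summable.
This is why no decay condition on `p` at infinity is needed.

If `t > 1`, then `t ^ c |Q_{j,m}| ≤ ∫ F ≤ 1`, hence `log t ≲ j`, while the local log-Hölder condition
bounds the oscillation of `p` on `Q_{j,m}` by a multiple of `1 / j`. So the powers `t ^ p x`,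
`x ∈ Q_{j,m}`, are comparable (`exists_comparability`), and `t ^ p x` may be replaced by the constant
`a_{j,m} = t ^ p z` with `z` the centre of the cube; it satisfies `a_{j,m} ≤ K F` on `Q_{j,m}`.

What remains is the estimate for a constant exponent (`tsum_step_le`). With `G = K F`, let
`N_{j,i}` be the measure of the union of the cubes `Q_{j,m}` with `a_{j,m} ≥ 2 ^ i`, and let
`μ_i = |{G ≥ 2 ^ i}|`. Then `N_{j,i} ≤ μ_i`, and `N_{j,i}` is zero or at least `2 ^ (-j n)`.
Splitting the `ℓ ^ (1 + ε)` norm into layers reduces the sum to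
`∑_i 2 ^ i ∑_j 2 ^ (-j n ε / (1 + ε)) N_{j,i} ^ (1 / (1 + ε))`. The inner sum runs over those `j` with
`2 ^ (-j n) ≤ μ_i` only, so as a geometric series it is at most
`C μ_i ^ (ε / (1 + ε)) μ_i ^ (1 / (1 + ε)) = C μ_i`, and `∑_i 2 ^ i μ_i ≤ 2 ∫ G`.
-/


open MeasureTheory ENNReal NNReal

noncomputable section

/-- The dyadic cube `Q_{j,m}` in `ℝⁿ`: centered at `2^{-j} m`, with sides parallel to the
coordinate axes and side length `2^{-j}`. -/
def Qcube (n : ℕ) (j : ℕ) (m : Fin n → ℤ) : Set (EuclideanSpace ℝ (Fin n)) :=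
  {x | ∀ i, (2 : ℝ) ^ (-(j : ℝ)) * ((m i : ℝ) - 1 / 2) ≤ x i ∧
        x i < (2 : ℝ) ^ (-(j : ℝ)) * ((m i : ℝ) + 1 / 2)}

/-- A function `g : ℝⁿ → ℝ` is locally log-Hölder continuous if there exists `c > 0` such
that `|g(x) − g(y)| ≤ c / log(e + 1/|x−y|)` for all `x, y ∈ ℝⁿ` (Euclidean distance). -/
def LocLogHolder {n : ℕ} (g : EuclideanSpace ℝ (Fin n) → ℝ) : Prop :=
  ∃ c : ℝ, 0 < c ∧ ∀ x y, |g x - g y| ≤ c / Real.log (Real.exp 1 + 1 / dist x y)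

/-! ### Sums of powers in `ℝ≥0∞` -/

/-- Truncated geometric series: the terms of `∑ ρ^j` that do not exceed `w` add up to at most
a constant times `w`, since the largest of them dominates. -/
lemma sum_geom_trunc_le (ρ : ℝ≥0∞) (h0 : ρ ≠ 0) (h1 : ρ ≠ ⊤) (N : ℕ) (w : ℝ≥0∞) :
    ∑ j ∈ Finset.range N, (if ρ ^ j ≤ w then ρ ^ j else 0) ≤ (1 - ρ)⁻¹ * w := by
  induction N generalizing w with
  | zero => simp
  | succ N ih =>
    by_cases hw : 1 ≤ w
    · calc ∑ j ∈ Finset.range (N + 1), (if ρ ^ j ≤ w then ρ ^ j else 0)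
          ≤ ∑ j ∈ Finset.range (N + 1), ρ ^ j := by
            gcongr with j
            split_ifs <;> simp
        _ ≤ ∑' j, ρ ^ j := ENNReal.sum_le_tsum _
        _ = (1 - ρ)⁻¹ * 1 := by rw [ENNReal.tsum_geometric, mul_one]
        _ ≤ _ := by gcongr
    · rw [Finset.sum_range_succ']
      have hz : (if ρ ^ 0 ≤ w then ρ ^ 0 else 0) = 0 := by simp [hw]
      rw [hz, add_zero]
      calc ∑ j ∈ Finset.range N, (if ρ ^ (j + 1) ≤ w then ρ ^ (j + 1) else 0)
          = ρ * ∑ j ∈ Finset.range N, (if ρ ^ j ≤ w / ρ then ρ ^ j else 0) := by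
            rw [Finset.mul_sum]
            refine Finset.sum_congr rfl fun j _ => ?_
            have : ρ ^ (j + 1) ≤ w ↔ ρ ^ j ≤ w / ρ := by
              rw [ENNReal.le_div_iff_mul_le (Or.inl h0) (Or.inl h1), pow_succ]
            simp only [this]
            split_ifs
            · rw [pow_succ, mul_comm]
            · simp
        _ ≤ ρ * ((1 - ρ)⁻¹ * (w / ρ)) := by gcongr; exact ih _
        _ = (1 - ρ)⁻¹ * w := by
            rw [mul_left_comm, ENNReal.mul_div_cancel h0 h1]

/-- The powers of two not exceeding `z` add up to at most `2 z`. -/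
lemma tsum_two_pow_trunc_le (z : ℝ≥0∞) :
    ∑' i : ℕ, (if (2 : ℝ≥0∞) ^ i ≤ z then (2 : ℝ≥0∞) ^ i else 0) ≤ 2 * z := by
  refine ENNReal.tsum_le_of_sum_range_le fun N => ?_
  -- The bound by `2 ^ N` is carried along: it makes the last term dominate the previous ones.
  have key : ∑ i ∈ Finset.range N, (if (2 : ℝ≥0∞) ^ i ≤ z then (2 : ℝ≥0∞) ^ i else 0) ≤ 2 * z ∧
      ∑ i ∈ Finset.range N, (if (2 : ℝ≥0∞) ^ i ≤ z then (2 : ℝ≥0∞) ^ i else 0) ≤ 2 ^ N := by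
    induction N with
    | zero => simp
    | succ N ih =>
      rw [Finset.sum_range_succ]
      split_ifs with h
      · have h2 : ∑ i ∈ Finset.range N, (if (2 : ℝ≥0∞) ^ i ≤ z then (2 : ℝ≥0∞) ^ i else 0) + 2 ^ N
            ≤ 2 * 2 ^ N := by
          rw [two_mul]; gcongr; exact ih.2
        exact ⟨h2.trans (by gcongr), by rwa [pow_succ, mul_comm]⟩
      · rw [add_zero]
        exact ⟨ih.1, ih.2.trans (by gcongr <;> simp)⟩
  exact key.1

/-- Dyadic layer decomposition of `a ^ r`; only layers of nonnegative index are needed, because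
`a` vanishes or is at least one. -/
lemma rpow_le_tsum_layers {a : ℝ≥0∞} (ha : a = 0 ∨ 1 ≤ a) (hat : a ≠ ⊤) {r : ℝ} (hr : 0 < r) :
    a ^ r ≤ ∑' i : ℕ, (2 * 2 ^ i : ℝ≥0∞) ^ r * (if (2 : ℝ≥0∞) ^ i ≤ a then 1 else 0) := by
  rcases ha with rfl | ha
  · simp [hr]
  · lift a to ℝ≥0 using hat
    obtain ⟨i, hi1, hi2⟩ := exists_nat_pow_near (x := a) (y := 2) (by exact_mod_cast ha) one_lt_two
    refine le_trans ?_ (ENNReal.le_tsum i)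
    have h1 : (2 : ℝ≥0∞) ^ i ≤ a := by exact_mod_cast hi1
    have h2 : (a : ℝ≥0∞) ≤ 2 * 2 ^ i := by
      rw [← pow_succ']; exact_mod_cast hi2.le
    rw [if_pos h1, mul_one]
    gcongr

lemma rpow_tsum_le_tsum_rpow {ι : Type*} (f : ι → ℝ≥0∞) {s : ℝ} (h0 : 0 < s) (h1 : s ≤ 1) :
    (∑' i, f i) ^ s ≤ ∑' i, f i ^ s := by
  have hfin : ∀ t : Finset ι, (∑ i ∈ t, f i) ^ s ≤ ∑ i ∈ t, f i ^ s := by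
    classical
    intro t
    induction t using Finset.induction_on with
    | empty => simp [h0]
    | insert a t hat ih =>
      rw [Finset.sum_insert hat, Finset.sum_insert hat]
      exact (ENNReal.rpow_add_le_add_rpow _ _ h0.le h1).trans (by gcongr)
  refine (ENNReal.le_rpow_inv_iff h0).1 ?_
  rw [ENNReal.tsum_eq_iSup_sum]
  refine iSup_le fun t => ?_
  rw [ENNReal.le_rpow_inv_iff h0]
  exact (hfin t).trans (ENNReal.sum_le_tsum t)

/-! ### Geometry of the dyadic cubes -/

lemma Qcube_eq_preimage (n j : ℕ) (m : Fin n → ℤ) :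
    Qcube n j m = (MeasurableEquiv.toLp 2 (Fin n → ℝ)).symm ⁻¹'
      (Set.univ.pi fun i => Set.Ico ((2 : ℝ) ^ (-(j : ℝ)) * ((m i : ℝ) - 1 / 2))
        ((2 : ℝ) ^ (-(j : ℝ)) * ((m i : ℝ) + 1 / 2))) := by
  ext x
  simp [Qcube, Set.mem_pi]

lemma measurableSet_Qcube (n j : ℕ) (m : Fin n → ℤ) : MeasurableSet (Qcube n j m) := by
  rw [Qcube_eq_preimage]
  exact (MeasurableEquiv.measurable _) (MeasurableSet.univ_pi fun i => measurableSet_Ico)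

lemma volume_Qcube (n j : ℕ) (m : Fin n → ℤ) :
    volume (Qcube n j m) = (2 : ℝ≥0∞) ^ (-((j : ℝ) * n)) := by
  rw [Qcube_eq_preimage,
    (EuclideanSpace.volume_preserving_symm_measurableEquiv_toLp (Fin n)).measure_preimage_equiv,
    Real.volume_pi_Ico]
  have : ∀ i : Fin n, (2 : ℝ) ^ (-(j : ℝ)) * ((m i : ℝ) + 1 / 2) -
      (2 : ℝ) ^ (-(j : ℝ)) * ((m i : ℝ) - 1 / 2) = (2 : ℝ) ^ (-(j : ℝ)) := fun i => by ring
  simp only [this, Finset.prod_const, Finset.card_univ, Fintype.card_fin]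
  rw [← ENNReal.ofReal_rpow_of_pos two_pos, ← ENNReal.rpow_natCast, ← ENNReal.rpow_mul]
  simp

lemma pairwise_disjoint_Qcube (n j : ℕ) : Pairwise (Function.onFun Disjoint (Qcube n j)) := by
  intro m m' hmm
  rw [Function.onFun, Set.disjoint_left]
  intro x hx hx'
  apply hmm
  funext i
  have hp : (0 : ℝ) < (2 : ℝ) ^ (-(j : ℝ)) := by positivity
  have h1 := lt_of_mul_lt_mul_left ((hx i).1.trans_lt (hx' i).2) hp.le
  have h2 := lt_of_mul_lt_mul_left ((hx' i).1.trans_lt (hx i).2) hp.le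
  have h3 : m i < m' i + 1 := by
    have : (m i : ℝ) < m' i + 1 := by linarith
    exact_mod_cast this
  have h4 : m' i < m i + 1 := by
    have : (m' i : ℝ) < m i + 1 := by linarith
    exact_mod_cast this
  omega

lemma tsum_setLIntegral_Qcube_le (n j : ℕ) (g : EuclideanSpace ℝ (Fin n) → ℝ≥0∞) :
    ∑' m, ∫⁻ x in Qcube n j m, g x ≤ ∫⁻ x, g x := by
  rw [← lintegral_iUnion (measurableSet_Qcube n j) (pairwise_disjoint_Qcube n j)]
  exact setLIntegral_le_lintegral _ _

lemma dist_le_of_mem_Qcube {n j : ℕ} {m : Fin n → ℤ} {x y : EuclideanSpace ℝ (Fin n)}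
    (hx : x ∈ Qcube n j m) (hy : y ∈ Qcube n j m) : dist x y ≤ n * (2 : ℝ) ^ (-(j : ℝ)) := by
  set s : ℝ := (2 : ℝ) ^ (-(j : ℝ)) with hs
  have hp : 0 < s := by positivity
  have hd : ∀ i, dist (x i) (y i) ^ 2 ≤ s ^ 2 := by
    intro i
    have h1 := hx i
    have h2 := hy i
    rw [← hs] at h1 h2
    have : dist (x i) (y i) ≤ s := by
      rw [Real.dist_eq, abs_le]
      constructor <;> linarith
    gcongr
  rw [EuclideanSpace.dist_eq]
  refine Real.sqrt_le_iff.2 ⟨by positivity, ?_⟩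
  calc ∑ i, dist (x i) (y i) ^ 2 ≤ ∑ _i : Fin n, s ^ 2 := Finset.sum_le_sum fun i _ => hd i
    _ = n * s ^ 2 := by simp
    _ ≤ (n * s) ^ 2 := by
      rw [mul_pow]
      gcongr
      exact_mod_cast Nat.le_self_pow two_ne_zero n

/-! ### Comparability of powers on a cube -/

/-- On a cube `Q_{j,m}`, an admissible value `t` (one with `t ^ c |Q_{j,m}| ≤ 1`) satisfies
`log t ≲ j`, whereas log-Hölder continuity of `1 / p` makes `p` oscillate by `≲ 1 / j` only.
Hence the powers `t ^ p x`, `x ∈ Q_{j,m}`, are comparable. -/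
lemma exists_comparability {n : ℕ} (hn : 0 < n) {p : EuclideanSpace ℝ (Fin n) → ℝ} {c b : ℝ}
    (hc : 0 < c) (hlow : ∀ x, c ≤ p x) (hup : ∀ x, p x ≤ b)
    (hinv : LocLogHolder fun x => 1 / p x) :
    ∃ K : ℝ≥0∞, K ≠ ⊤ ∧ ∀ (j : ℕ) (m : Fin n → ℤ), ∀ x ∈ Qcube n j m, ∀ y ∈ Qcube n j m,
      ∀ t : ℝ≥0∞, 1 ≤ t → t ≠ ⊤ → t ^ c * volume (Qcube n j m) ≤ 1 →
        t ^ p x ≤ K * t ^ p y := by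
  obtain ⟨c₀, hc₀, hH⟩ := hinv
  have hn1 : (1 : ℝ) ≤ n := by exact_mod_cast hn
  have hlogn : 0 ≤ Real.log n := Real.log_nonneg hn1
  set K₀ : ℝ := b ^ 2 * c₀ * (1 + Real.log n) * n / c with hK₀
  have hK₀0 : 0 ≤ K₀ := by positivity
  refine ⟨ENNReal.ofReal (Real.exp K₀), ENNReal.ofReal_ne_top, ?_⟩
  intro j m x hx y hy t ht1 htop hvol
  rw [volume_Qcube] at hvol
  have hpx : 0 < p x := hc.trans_le (hlow x)
  have hpy : 0 < p y := hc.trans_le (hlow y)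
  obtain ⟨τ, hτ⟩ : ∃ τ : ℝ, τ = t.toReal := ⟨_, rfl⟩
  have htτ : t = ENNReal.ofReal τ := by rw [hτ, ENNReal.ofReal_toReal htop]
  have hτ1 : 1 ≤ τ := by
    rw [hτ]; simpa using ENNReal.toReal_mono htop ht1
  have hτ0 : 0 < τ := by linarith
  have hlogτ : 0 ≤ Real.log τ := Real.log_nonneg hτ1
  -- The volume condition turns into a bound for the logarithm.
  have hlog : c * Real.log τ ≤ j * n * Real.log 2 := by
    have h1 : τ ^ c * (2 : ℝ) ^ (-((j : ℝ) * n)) ≤ 1 := by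
      have := ENNReal.toReal_mono ENNReal.one_ne_top hvol
      rwa [ENNReal.toReal_mul, ← ENNReal.toReal_rpow, ← ENNReal.toReal_rpow, ← hτ,
        ENNReal.toReal_ofNat, ENNReal.toReal_one] at this
    have h2 := Real.log_le_log (by positivity) h1
    rw [Real.log_mul (by positivity) (by positivity), Real.log_rpow hτ0, Real.log_rpow two_pos,
      Real.log_one] at h2
    linarith
  have hmain : Real.log τ * p x ≤ K₀ + Real.log τ * p y := by
    rcases eq_or_ne x y with rfl | hxy
    · linarith
    set d := dist x y with hd
    have hd0 : 0 < d := dist_pos.2 hxy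
    have hdle : d ≤ n * (2 : ℝ) ^ (-(j : ℝ)) := dist_le_of_mem_Qcube hx hy
    set L := Real.log (Real.exp 1 + 1 / d) with hL
    have hL1 : 1 ≤ L := by
      rw [hL, Real.le_log_iff_exp_le (by positivity)]
      have : 0 < 1 / d := by positivity
      linarith
    have hLj : j * Real.log 2 ≤ L * (1 + Real.log n) := by
      have h1 : (2 : ℝ) ^ (j : ℝ) ≤ (Real.exp 1 + 1 / d) * n := by
        have h2 : (2 : ℝ) ^ (j : ℝ) * d ≤ n := by
          calc (2 : ℝ) ^ (j : ℝ) * d ≤ (2 : ℝ) ^ (j : ℝ) * (n * (2 : ℝ) ^ (-(j : ℝ))) := by gcongr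
            _ = n := by
              rw [Real.rpow_neg two_pos.le]
              field_simp
        calc (2 : ℝ) ^ (j : ℝ) ≤ n / d := (le_div_iff₀ hd0).2 h2
          _ = 1 / d * n := by ring
          _ ≤ _ := by gcongr; linarith [Real.exp_pos 1]
      have h3 := Real.log_le_log (by positivity) h1
      rw [Real.log_rpow two_pos, Real.log_mul (by positivity) (by positivity), ← hL] at h3
      nlinarith
    have hpdiff : (p x - p y) * L ≤ b ^ 2 * c₀ := by
      have h1 : 1 / p y - 1 / p x ≤ c₀ / L := by
        have := hH x y
        rw [← hd, ← hL, abs_sub_comm] at this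
        exact (le_abs_self _).trans this
      have h2 : (1 / p y - 1 / p x) * L ≤ c₀ := by
        rwa [← le_div_iff₀ (by linarith)]
      have h3 : (p x - p y) * L = p x * p y * ((1 / p y - 1 / p x) * L) := by
        field_simp
      have h4 : p x * p y ≤ b ^ 2 := by
        rw [sq]
        exact mul_le_mul (hup x) (hup y) hpy.le (hpx.le.trans (hup x))
      rw [h3]
      calc p x * p y * ((1 / p y - 1 / p x) * L) ≤ p x * p y * c₀ := by gcongr
        _ ≤ _ := by gcongr
    rcases le_total (p x) (p y) with hle | hle
    · nlinarith
    · have h5 : (p x - p y) * Real.log τ ≤ K₀ := by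
        have h6 : 0 ≤ p x - p y := by linarith
        rw [hK₀, le_div_iff₀ hc]
        calc (p x - p y) * Real.log τ * c = (p x - p y) * (c * Real.log τ) := by ring
          _ ≤ (p x - p y) * (j * n * Real.log 2) := by gcongr
          _ = (p x - p y) * n * (j * Real.log 2) := by ring
          _ ≤ (p x - p y) * n * (L * (1 + Real.log n)) := by gcongr
          _ = ((p x - p y) * L) * ((1 + Real.log n) * n) := by ring
          _ ≤ b ^ 2 * c₀ * ((1 + Real.log n) * n) := by gcongr
          _ = _ := by ring
      linarith
  rw [htτ, ENNReal.ofReal_rpow_of_pos hτ0, ENNReal.ofReal_rpow_of_pos hτ0,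
    ← ENNReal.ofReal_mul (Real.exp_pos _).le]
  apply ENNReal.ofReal_le_ofReal
  rw [Real.rpow_def_of_pos hτ0, Real.rpow_def_of_pos hτ0, ← Real.exp_add]
  exact Real.exp_le_exp.2 hmain

/-! ### The estimate for a constant exponent -/

lemma two_rpow_scale_eq_pow (n j : ℕ) (ε : ℝ) :
    (2 : ℝ≥0∞) ^ (-((j : ℝ) * n * ε) / (1 + ε)) =
      ((2 : ℝ≥0∞) ^ (-((n : ℝ) * ε) / (1 + ε))) ^ j := by
  rw [← ENNReal.rpow_natCast, ← ENNReal.rpow_mul]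
  congr 1
  ring

lemma two_rpow_ratio_lt_one {n : ℕ} (hn : 0 < n) {ε : ℝ} (hε : 0 < ε) :
    (2 : ℝ≥0∞) ^ (-((n : ℝ) * ε) / (1 + ε)) < 1 := by
  apply ENNReal.rpow_lt_one_of_one_lt_of_neg (by norm_num)
  have : (0 : ℝ) < n := by exact_mod_cast hn
  rw [neg_div]
  have : 0 < (n : ℝ) * ε / (1 + ε) := by positivity
  linarith

lemma two_rpow_ratio_ne_zero (n : ℕ) (ε : ℝ) :
    (2 : ℝ≥0∞) ^ (-((n : ℝ) * ε) / (1 + ε)) ≠ 0 :=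
  (ENNReal.rpow_pos (by norm_num) (by norm_num)).ne'

/-- The Jawerth estimate with constant exponent, for step functions `a j` on the cubes of side
length `2 ^ (-j)` lying below a common function `G`. A level set of `a j` is a union of cubes
contained in the corresponding level set of `G`, so it is empty as soon as the latter has measure
smaller than that of one cube. For each level only the scales `2 ^ (-j n) ≤ |{G ≥ 2 ^ i}|`
contribute, and their weights form a geometric series. -/
lemma tsum_step_le {n : ℕ} (hn : 0 < n) {ε : ℝ} (hε : 0 < ε)
    {G : EuclideanSpace ℝ (Fin n) → ℝ≥0∞} (hG : Measurable G)
    {a : ℕ → (Fin n → ℤ) → ℝ≥0∞} (ha : ∀ j m, a j m = 0 ∨ 1 ≤ a j m)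
    (hat : ∀ j m, a j m ≠ ⊤)
    (hae : ∀ j m, ∀ᵐ y ∂(volume.restrict (Qcube n j m)), a j m ≤ G y) :
    ∑' j : ℕ, (2 : ℝ≥0∞) ^ (-((j : ℝ) * n * ε) / (1 + ε)) *
        (∑' m, volume (Qcube n j m) * a j m ^ (1 + ε)) ^ (1 / (1 + ε))
      ≤ 4 * (1 - (2 : ℝ≥0∞) ^ (-((n : ℝ) * ε) / (1 + ε)))⁻¹ * ∫⁻ x, G x := by
  have hr : 0 < 1 + ε := by linarith
  have hq0 : 0 < 1 / (1 + ε) := by positivity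
  have hq1 : 1 / (1 + ε) ≤ 1 := by rw [div_le_one hr]; linarith
  set ρ : ℝ≥0∞ := (2 : ℝ≥0∞) ^ (-((n : ℝ) * ε) / (1 + ε)) with hρ
  have hρ0 : ρ ≠ 0 := two_rpow_ratio_ne_zero n ε
  have hρt : ρ ≠ ⊤ := ((two_rpow_ratio_lt_one hn hε).trans ENNReal.one_lt_top).ne
  simp only [two_rpow_scale_eq_pow, ← hρ]
  -- `N j i` is the measure of the `i`-th level set of the step function `a j`.
  let N : ℕ → ℕ → ℝ≥0∞ := fun j i =>
    ∑' m, volume (Qcube n j m) * (if (2 : ℝ≥0∞) ^ i ≤ a j m then 1 else 0)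
  let μ : ℕ → ℝ≥0∞ := fun i => volume {x | (2 : ℝ≥0∞) ^ i ≤ G x}
  have hmeas : ∀ i : ℕ, MeasurableSet {x | (2 : ℝ≥0∞) ^ i ≤ G x} := fun i =>
    measurableSet_le measurable_const hG
  have hNμ : ∀ j i, N j i ≤ μ i := by
    intro j i
    have : μ i = ∫⁻ x, {x | (2 : ℝ≥0∞) ^ i ≤ G x}.indicator 1 x := by
      rw [lintegral_indicator_one (hmeas i)]
    rw [this]
    refine le_trans (ENNReal.tsum_le_tsum fun m => ?_) (tsum_setLIntegral_Qcube_le n j _)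
    split_ifs with h
    · rw [mul_one, ← setLIntegral_one]
      refine lintegral_mono_ae ?_
      filter_upwards [hae j m] with y hy
      rw [Set.indicator_of_mem (show y ∈ {x | (2 : ℝ≥0∞) ^ i ≤ G x} from h.trans hy)]
      rfl
    · simp
  have hN : ∀ j i, N j i = 0 ∨ (2 : ℝ≥0∞) ^ (-((j : ℝ) * n)) ≤ N j i := by
    intro j i
    by_cases h : ∃ m, (2 : ℝ≥0∞) ^ i ≤ a j m
    · obtain ⟨m, hm⟩ := h
      right
      refine le_trans ?_ (ENNReal.le_tsum m)
      rw [if_pos hm, mul_one, volume_Qcube]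
    · left
      push Not at h
      refine ENNReal.tsum_eq_zero.2 fun m => ?_
      rw [if_neg (not_le.2 (h m)), mul_zero]
  have step1 : ∀ j, (∑' m, volume (Qcube n j m) * a j m ^ (1 + ε)) ^ (1 / (1 + ε)) ≤
      ∑' i, 2 * 2 ^ i * N j i ^ (1 / (1 + ε)) := by
    intro j
    have h1 : ∑' m, volume (Qcube n j m) * a j m ^ (1 + ε) ≤
        ∑' i : ℕ, (2 * 2 ^ i : ℝ≥0∞) ^ (1 + ε) * N j i := by
      calc ∑' m, volume (Qcube n j m) * a j m ^ (1 + ε)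
          ≤ ∑' m, ∑' i : ℕ, (2 * 2 ^ i : ℝ≥0∞) ^ (1 + ε) *
              (volume (Qcube n j m) * (if (2 : ℝ≥0∞) ^ i ≤ a j m then 1 else 0)) := by
            refine ENNReal.tsum_le_tsum fun m => ?_
            refine (mul_le_mul_right (rpow_le_tsum_layers (ha j m) (hat j m) hr) _).trans ?_
            rw [← ENNReal.tsum_mul_left]
            refine ENNReal.tsum_le_tsum fun i => ?_
            rw [mul_left_comm]
        _ = _ := by
            rw [ENNReal.tsum_comm]
            simp only [ENNReal.tsum_mul_left, N]
    refine (ENNReal.rpow_le_rpow h1 hq0.le).trans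
      ((rpow_tsum_le_tsum_rpow _ hq0 hq1).trans (le_of_eq ?_))
    refine tsum_congr fun i => ?_
    rw [ENNReal.mul_rpow_of_nonneg _ _ hq0.le, ← ENNReal.rpow_mul, mul_one_div_cancel hr.ne',
      ENNReal.rpow_one]
  have step2 : ∀ j i, ρ ^ j * N j i ^ (1 / (1 + ε)) ≤
      μ i ^ (1 / (1 + ε)) * (if ρ ^ j ≤ μ i ^ (ε / (1 + ε)) then ρ ^ j else 0) := by
    intro j i
    rcases hN j i with h | h
    · rw [h, ENNReal.zero_rpow_of_pos hq0, mul_zero]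
      exact zero_le
    · have h1 : ρ ^ j ≤ μ i ^ (ε / (1 + ε)) := by
        have h2 : ρ ^ j = ((2 : ℝ≥0∞) ^ (-((j : ℝ) * n))) ^ (ε / (1 + ε)) := by
          rw [hρ, ← ENNReal.rpow_natCast, ← ENNReal.rpow_mul, ← ENNReal.rpow_mul]
          congr 1
          ring
        rw [h2]
        exact ENNReal.rpow_le_rpow (h.trans (hNμ j i)) (by positivity)
      rw [if_pos h1, mul_comm]
      gcongr
      exact hNμ j i
  have step3 : ∀ i, ∑' j, ρ ^ j * N j i ^ (1 / (1 + ε)) ≤ (1 - ρ)⁻¹ * μ i := by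
    intro i
    refine (ENNReal.tsum_le_tsum fun j => step2 j i).trans ?_
    rw [ENNReal.tsum_mul_left]
    calc _ ≤ μ i ^ (1 / (1 + ε)) * ((1 - ρ)⁻¹ * μ i ^ (ε / (1 + ε))) := by
          gcongr
          exact ENNReal.tsum_le_of_sum_range_le fun M => sum_geom_trunc_le ρ hρ0 hρt M _
      _ = (1 - ρ)⁻¹ * (μ i ^ (1 / (1 + ε)) * μ i ^ (ε / (1 + ε))) := by ring
      _ = (1 - ρ)⁻¹ * μ i := by
          rw [← ENNReal.rpow_add_of_nonneg _ _ hq0.le (by positivity), ← add_div,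
            div_self hr.ne', ENNReal.rpow_one]
  have step4 : ∑' i, (2 : ℝ≥0∞) ^ i * μ i ≤ 2 * ∫⁻ x, G x := by
    have h1 : ∀ i : ℕ, (2 : ℝ≥0∞) ^ i * μ i =
        ∫⁻ x, (if (2 : ℝ≥0∞) ^ i ≤ G x then (2 : ℝ≥0∞) ^ i else 0) := by
      intro i
      rw [← lintegral_indicator_const (hmeas i)]
      simp only [Set.indicator_apply, Set.mem_ofPred_eq]
    simp only [h1]
    rw [← lintegral_tsum fun i => (Measurable.ite (hmeas i) measurable_const
      measurable_const).aemeasurable, ← lintegral_const_mul _ hG]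
    exact lintegral_mono fun x => tsum_two_pow_trunc_le (G x)
  calc ∑' j, ρ ^ j * (∑' m, volume (Qcube n j m) * a j m ^ (1 + ε)) ^ (1 / (1 + ε))
      ≤ ∑' j, ∑' i, 2 * 2 ^ i * (ρ ^ j * N j i ^ (1 / (1 + ε))) := by
        refine ENNReal.tsum_le_tsum fun j => ?_
        refine (mul_le_mul_right (step1 j) _).trans ?_
        rw [← ENNReal.tsum_mul_left]
        refine ENNReal.tsum_le_tsum fun i => ?_
        rw [mul_left_comm]
    _ = ∑' i, 2 * 2 ^ i * ∑' j, ρ ^ j * N j i ^ (1 / (1 + ε)) := by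
        rw [ENNReal.tsum_comm]
        simp only [ENNReal.tsum_mul_left]
    _ ≤ ∑' i, 2 * 2 ^ i * ((1 - ρ)⁻¹ * μ i) :=
        ENNReal.tsum_le_tsum fun i => mul_le_mul_right (step3 i) _
    _ = 2 * (1 - ρ)⁻¹ * ∑' i, 2 ^ i * μ i := by
        rw [← ENNReal.tsum_mul_left]
        exact tsum_congr fun i => by ring
    _ ≤ 2 * (1 - ρ)⁻¹ * (2 * ∫⁻ x, G x) := by gcongr
    _ = _ := by ring

/-! ### The variable exponent -/

/-- **Core modular estimate of the variable-exponent Jawerth embedding.**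
If `ε > 0` and `p : ℝⁿ → (0,∞)` satisfies `0 < inf p ≤ sup p < ∞` with `1/p` locally
log-Hölder continuous, then there is `C > 0` such that for every measurable
`h : ℝⁿ → [0,∞)` with `∫ h(x)^{p(x)} dx ≤ 1` one has
`Σ_j 2^{-jnε/(1+ε)} (Σ_m ∫_{Q_{j,m}} h_{j,m}^{(1+ε)p(x)} dx)^{1/(1+ε)} ≤ C`,
where `h_{j,m} = ess inf_{Q_{j,m}} h`. -/
theorem jawerth_core_modular_estimate (n : ℕ) (hn : 0 < n) (ε : ℝ) (hε : 0 < ε)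
    (p : EuclideanSpace ℝ (Fin n) → ℝ) (c b : ℝ) (hc : 0 < c)
    (hlow : ∀ x, c ≤ p x) (hup : ∀ x, p x ≤ b) (hpmeas : Measurable p)
    (hinv : LocLogHolder fun x => 1 / p x) :
    ∃ C : ℝ≥0, 0 < C ∧ ∀ h : EuclideanSpace ℝ (Fin n) → ℝ,
      Measurable h → (∀ x, 0 ≤ h x) →
      (∫⁻ x, ENNReal.ofReal (h x ^ p x)) ≤ 1 →
      ∑' j : ℕ, (2 : ℝ≥0∞) ^ (-((j : ℝ) * n * ε) / (1 + ε)) *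
        (∑' m : Fin n → ℤ, ∫⁻ x in Qcube n j m,
            (essInf (fun y => ENNReal.ofReal (h y)) (volume.restrict (Qcube n j m)))
              ^ ((1 + ε) * p x)) ^ (1 / (1 + ε))
      ≤ C := by
  obtain ⟨K, hK, hcomp⟩ := exists_comparability hn hc hlow hup hinv
  have hr : 0 < 1 + ε := by linarith
  have hq0 : 0 < 1 / (1 + ε) := by positivity
  have hq1 : 1 / (1 + ε) ≤ 1 := by rw [div_le_one hr]; linarith
  set ρ : ℝ≥0∞ := (2 : ℝ≥0∞) ^ (-((n : ℝ) * ε) / (1 + ε)) with hρ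
  have hρ1 : ρ < 1 := two_rpow_ratio_lt_one hn hε
  set C : ℝ≥0∞ := (1 - ρ)⁻¹ + K * (4 * (1 - ρ)⁻¹ * K) with hC
  have hinvt : (1 - ρ)⁻¹ ≠ ⊤ := ENNReal.inv_ne_top.2 (tsub_pos_of_lt hρ1).ne'
  have hCt : C ≠ ⊤ := ENNReal.add_ne_top.2 ⟨hinvt,
    ENNReal.mul_ne_top hK (ENNReal.mul_ne_top (ENNReal.mul_ne_top (by norm_num) hinvt) hK)⟩
  refine ⟨C.toNNReal + 1, by positivity, fun h hh hh0 hint => ?_⟩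
  suffices hmain : ∑' j : ℕ, (2 : ℝ≥0∞) ^ (-((j : ℝ) * n * ε) / (1 + ε)) *
        (∑' m : Fin n → ℤ, ∫⁻ x in Qcube n j m,
            (essInf (fun y => ENNReal.ofReal (h y)) (volume.restrict (Qcube n j m)))
              ^ ((1 + ε) * p x)) ^ (1 / (1 + ε)) ≤ C by
    refine hmain.trans ?_
    rw [ENNReal.coe_add, ENNReal.coe_toNNReal hCt]
    exact le_self_add
  have hppos : ∀ x, 0 < p x := fun x => hc.trans_le (hlow x)
  let t : ℕ → (Fin n → ℤ) → ℝ≥0∞ := fun j m =>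
    essInf (fun y => ENNReal.ofReal (h y)) (volume.restrict (Qcube n j m))
  let F : EuclideanSpace ℝ (Fin n) → ℝ≥0∞ := fun x => ENNReal.ofReal (h x ^ p x)
  have hFm : Measurable F := (hh.pow hpmeas).ennreal_ofReal
  have htle : ∀ j m, ∀ᵐ y ∂(volume.restrict (Qcube n j m)), t j m ≤ ENNReal.ofReal (h y) :=
    fun j m => ae_essInf_le
  have htF : ∀ j m, ∀ᵐ y ∂(volume.restrict (Qcube n j m)), t j m ^ p y ≤ F y := by
    intro j m
    filter_upwards [htle j m] with y hy
    refine (ENNReal.rpow_le_rpow hy (hppos y).le).trans (le_of_eq ?_)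
    exact ENNReal.ofReal_rpow_of_nonneg (hh0 y) (hppos y).le
  have htop : ∀ j m, t j m ≠ ⊤ := by
    intro j m
    have hne : volume.restrict (Qcube n j m) ≠ 0 := by
      rw [Ne, Measure.restrict_eq_zero, volume_Qcube]
      exact (ENNReal.rpow_pos (by norm_num) (by norm_num)).ne'
    have : (ae (volume.restrict (Qcube n j m))).NeBot := ae_neBot.2 hne
    obtain ⟨y, hy⟩ := (htle j m).exists
    exact (hy.trans_lt ENNReal.ofReal_lt_top).ne
  have hvol : ∀ j m, 1 < t j m → t j m ^ c * volume (Qcube n j m) ≤ 1 := by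
    intro j m h1
    rw [← setLIntegral_const]
    refine le_trans (lintegral_mono_ae ?_) ((setLIntegral_le_lintegral _ F).trans hint)
    filter_upwards [htF j m] with y hy
    exact (ENNReal.rpow_le_rpow_of_exponent_le h1.le (hlow y)).trans hy
  let z : ℕ → (Fin n → ℤ) → EuclideanSpace ℝ (Fin n) := fun j m =>
    WithLp.toLp 2 fun i => (2 : ℝ) ^ (-(j : ℝ)) * (m i : ℝ)
  have hz : ∀ j m, z j m ∈ Qcube n j m := by
    intro j m i
    have hp : (0 : ℝ) < (2 : ℝ) ^ (-(j : ℝ)) := by positivity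
    constructor
    · exact mul_le_mul_of_nonneg_left (by linarith) hp.le
    · exact mul_lt_mul_of_pos_left (by linarith) hp
  -- The cubes with `t j m ≤ 1` are handled by `t ^ ((1 + ε) p) ≤ t ^ p`; on the others the
  -- exponent is frozen at the centre of the cube.
  let a : ℕ → (Fin n → ℤ) → ℝ≥0∞ := fun j m => if 1 < t j m then t j m ^ p (z j m) else 0
  have ha : ∀ j m, a j m = 0 ∨ 1 ≤ a j m := by
    intro j m
    by_cases h1 : 1 < t j m
    · right
      simp only [a, if_pos h1]
      exact ENNReal.one_le_rpow h1.le (hppos _)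
    · left
      simp only [a, if_neg h1]
  have hat : ∀ j m, a j m ≠ ⊤ := by
    intro j m
    simp only [a]
    split_ifs
    · exact ENNReal.rpow_ne_top_of_nonneg (hppos _).le (htop j m)
    · exact ENNReal.zero_ne_top
  have hae : ∀ j m, ∀ᵐ y ∂(volume.restrict (Qcube n j m)), a j m ≤ K * F y := by
    intro j m
    filter_upwards [htF j m, ae_restrict_mem (measurableSet_Qcube n j m)] with y hy hyQ
    simp only [a]
    split_ifs with h1
    · exact (hcomp j m _ (hz j m) y hyQ _ h1.le (htop j m) (hvol j m h1)).trans (by gcongr)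
    · exact zero_le
  have hcube : ∀ j m, ∫⁻ x in Qcube n j m, t j m ^ ((1 + ε) * p x) ≤
      (∫⁻ x in Qcube n j m, F x) + K ^ (1 + ε) * (volume (Qcube n j m) * a j m ^ (1 + ε)) := by
    intro j m
    by_cases h1 : 1 < t j m
    · refine le_trans ?_ le_add_self
      calc ∫⁻ x in Qcube n j m, t j m ^ ((1 + ε) * p x)
          ≤ ∫⁻ x in Qcube n j m, (K * a j m) ^ (1 + ε) := by
            refine lintegral_mono_ae ?_
            filter_upwards [ae_restrict_mem (measurableSet_Qcube n j m)] with x hx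
            rw [mul_comm (1 + ε), ENNReal.rpow_mul]
            refine ENNReal.rpow_le_rpow ?_ hr.le
            simp only [a, if_pos h1]
            exact hcomp j m x hx _ (hz j m) _ h1.le (htop j m) (hvol j m h1)
        _ = _ := by
            rw [setLIntegral_const, ENNReal.mul_rpow_of_nonneg _ _ hr.le]
            ring
    · refine le_trans (lintegral_mono_ae ?_) le_self_add
      filter_upwards [htF j m] with x hx
      refine le_trans (ENNReal.rpow_le_rpow_of_exponent_ge (not_lt.1 h1) ?_) hx
      nlinarith [hppos x]
  have hscale : ∀ j, (∑' m, ∫⁻ x in Qcube n j m, t j m ^ ((1 + ε) * p x)) ^ (1 / (1 + ε)) ≤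
      1 + K * (∑' m, volume (Qcube n j m) * a j m ^ (1 + ε)) ^ (1 / (1 + ε)) := by
    intro j
    have h1 : ∑' m, ∫⁻ x in Qcube n j m, t j m ^ ((1 + ε) * p x) ≤
        1 + K ^ (1 + ε) * ∑' m, volume (Qcube n j m) * a j m ^ (1 + ε) := by
      refine (ENNReal.tsum_le_tsum (hcube j)).trans ?_
      rw [ENNReal.tsum_add, ENNReal.tsum_mul_left]
      gcongr
      exact (tsum_setLIntegral_Qcube_le n j F).trans hint
    refine (ENNReal.rpow_le_rpow h1 hq0.le).trans
      ((ENNReal.rpow_add_le_add_rpow _ _ hq0.le hq1).trans (le_of_eq ?_))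
    rw [ENNReal.one_rpow, ENNReal.mul_rpow_of_nonneg _ _ hq0.le, ← ENNReal.rpow_mul,
      mul_one_div_cancel hr.ne', ENNReal.rpow_one]
  have hstep := tsum_step_le hn hε (hFm.const_mul K) ha hat hae
  rw [lintegral_const_mul _ hFm, ← hρ] at hstep
  calc _ ≤ ∑' j : ℕ, ((2 : ℝ≥0∞) ^ (-((j : ℝ) * n * ε) / (1 + ε)) +
          K * ((2 : ℝ≥0∞) ^ (-((j : ℝ) * n * ε) / (1 + ε)) *
            (∑' m, volume (Qcube n j m) * a j m ^ (1 + ε)) ^ (1 / (1 + ε)))) := by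
        refine ENNReal.tsum_le_tsum fun j => ?_
        refine (mul_le_mul_right (hscale j) _).trans (le_of_eq ?_)
        ring
    _ = (1 - ρ)⁻¹ + K * ∑' j : ℕ, ((2 : ℝ≥0∞) ^ (-((j : ℝ) * n * ε) / (1 + ε)) *
            (∑' m, volume (Qcube n j m) * a j m ^ (1 + ε)) ^ (1 / (1 + ε))) := by
        rw [ENNReal.tsum_add, ENNReal.tsum_mul_left]
        congr 1
        simp only [two_rpow_scale_eq_pow, ← hρ]
        exact ENNReal.tsum_geometric ρ
    _ ≤ (1 - ρ)⁻¹ + K * (4 * (1 - ρ)⁻¹ * (K * 1)) := by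
        gcongr
        refine hstep.trans ?_
        gcongr
    _ = C := by rw [mul_one]

end
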